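/- arXiv:1201.5622 — 3 statements merged into one kernel-verified Lean document; each statement's English description precedes it below -/
import Mathlib

section
/- Let n ≥ 1, ε > 0, and let μ be a Borel probability measure on ℝ^n × ℝ^n. Define the kernel K^ε(x,y) = (2/ε)^{n/2} ∫ exp(2πi k₀·(x−y)/ε) · exp(−(π/ε)(|x−x₀|² + |y−x₀|²)) dμ(x₀,k₀) for x,y ∈ ℝ^n. Then for every continuous compactly supported function u : ℝ^n → ℂ, the double integral ∫∫ K^ε(x,y) u(x) conj(u(y)) dx dy is a nonnegative real number. (In other words, K^ε is the kernel of a positive semi-definite operator on L²(ℝ^n).) -/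
open MeasureTheory
open scoped RealInnerProductSpace

/-!
The integrand of the kernel factors as `φ p x * conj (φ p y)`, where
`φ p x = exp (2πi ⟪p.2, x⟫ / ε) * exp (-(π/ε) ‖x - p.1‖²)` is a coherent state of modulus at most `1`.
Since `u` is integrable and `μ` is finite, Fubini's theorem (`integral_integral_mul_conj`) moves the
`μ`-integral outside, and the quadratic form becomes `(2/ε)^(n/2) ∫ |∫ φ p x * u x dx|² dμ(p)`.
-/

/-- The quadratic form of a superposition of rank-one kernels `g p x * conj (g p y)` is the
superposition of the squares `|∫ g p|²`. The bound by `b`, uniform in `p`, makes the triple integral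
absolutely convergent. -/
lemma integral_integral_mul_conj {P E : Type*}
    [TopologicalSpace P] [MeasurableSpace P] [BorelSpace P] [SecondCountableTopology P]
    [TopologicalSpace E] [MeasurableSpace E] [BorelSpace E] [SecondCountableTopology E]
    (μ : Measure P) [IsFiniteMeasure μ] (ν : Measure E) [SFinite ν]
    (g : P → E → ℂ) (hg : Continuous (Function.uncurry g))
    (b : E → ℝ) (hb : Integrable b ν) (hgb : ∀ p x, ‖g p x‖ ≤ b x) :
    ∫ x, ∫ y, ∫ p, g p x * (starRingEnd ℂ) (g p y) ∂μ ∂ν ∂ν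
      = ((∫ p, ‖∫ x, g p x ∂ν‖ ^ 2 ∂μ : ℝ) : ℂ) := by
  have hint : Integrable (fun q : (E × E) × P =>
      g q.2 q.1.1 * (starRingEnd ℂ) (g q.2 q.1.2)) ((ν.prod ν).prod μ) := by
    have hdom : Integrable (fun q : (E × E) × P => b q.1.1 * b q.1.2) ((ν.prod ν).prod μ) :=
      (hb.mul_prod hb).comp_fst μ
    refine hdom.mono' (Continuous.aestronglyMeasurable ?_) (Filter.Eventually.of_forall fun q => ?_)
    · have h1 : Continuous fun q : (E × E) × P => g q.2 q.1.1 :=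
        hg.comp (continuous_snd.prodMk (continuous_fst.comp continuous_fst))
      have h2 : Continuous fun q : (E × E) × P => g q.2 q.1.2 :=
        hg.comp (continuous_snd.prodMk (continuous_snd.comp continuous_fst))
      exact h1.mul (Complex.continuous_conj.comp h2)
    · rw [norm_mul, RCLike.norm_conj]
      exact mul_le_mul (hgb _ _) (hgb _ _) (norm_nonneg _) ((norm_nonneg _).trans (hgb q.2 _))
  calc ∫ x, ∫ y, ∫ p, g p x * (starRingEnd ℂ) (g p y) ∂μ ∂ν ∂ν
      = ∫ z, ∫ p, g p z.1 * (starRingEnd ℂ) (g p z.2) ∂μ ∂(ν.prod ν) :=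
        (integral_prod _ hint.integral_prod_left).symm
    _ = ∫ p, ∫ z, g p z.1 * (starRingEnd ℂ) (g p z.2) ∂(ν.prod ν) ∂μ :=
        integral_integral_swap hint
    _ = ∫ p, ((‖∫ x, g p x ∂ν‖ ^ 2 : ℝ) : ℂ) ∂μ := by
        refine integral_congr_ae (Filter.Eventually.of_forall fun p => ?_)
        have h := integral_prod_mul (μ := ν) (ν := ν) (g p) (fun y => (starRingEnd ℂ) (g p y))
        simp only [h, integral_conj, Complex.mul_conj']
        push_cast
        rfl
    _ = _ := integral_ofReal

/-- The Gaussian (coherent-state) smoothing kernel of a phase-space probability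
measure is the kernel of a positive semi-definite operator: for every continuous
compactly supported `u`, the quadratic form `∫∫ K(x,y) u(x) conj(u(y)) dx dy`
is a nonnegative real number. -/
theorem stmt_0 (n : ℕ) (hn : 1 ≤ n) (ε : ℝ) (hε : 0 < ε)
    (μ : Measure (EuclideanSpace ℝ (Fin n) × EuclideanSpace ℝ (Fin n)))
    [IsProbabilityMeasure μ]
    (K : EuclideanSpace ℝ (Fin n) → EuclideanSpace ℝ (Fin n) → ℂ)
    (hK : ∀ x y, K x y =
      (((2 / ε) ^ ((n : ℝ) / 2) : ℝ) : ℂ) *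
        ∫ p : EuclideanSpace ℝ (Fin n) × EuclideanSpace ℝ (Fin n),
          Complex.exp (2 * Real.pi * Complex.I * ((⟪p.2, x - y⟫ : ℝ) : ℂ) / (ε : ℂ)) *
            Complex.exp (-((Real.pi / ε : ℝ) : ℂ) *
              (((‖x - p.1‖ ^ 2 + ‖y - p.1‖ ^ 2 : ℝ)) : ℂ)) ∂μ)
    (u : EuclideanSpace ℝ (Fin n) → ℂ)
    (hu : Continuous u) (hsupp : HasCompactSupport u) :
    ∃ r : ℝ, 0 ≤ r ∧
      (∫ x : EuclideanSpace ℝ (Fin n), ∫ y : EuclideanSpace ℝ (Fin n),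
        K x y * u x * (starRingEnd ℂ) (u y)) = (r : ℂ) := by
  set g : EuclideanSpace ℝ (Fin n) × EuclideanSpace ℝ (Fin n) → EuclideanSpace ℝ (Fin n) → ℂ :=
    fun p x => Complex.exp (2 * Real.pi * Complex.I * ((⟪p.2, x⟫ : ℝ) : ℂ) / (ε : ℂ)) *
      Complex.exp (-((Real.pi / ε : ℝ) : ℂ) * ((‖x - p.1‖ ^ 2 : ℝ) : ℂ)) * u x with hgdef
  have hg : Continuous (Function.uncurry g) := by
    simp only [hgdef, Function.uncurry_def]
    fun_prop
  have hgb : ∀ p x, ‖g p x‖ ≤ ‖u x‖ := by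
    intro p x
    have h1 : 2 * Real.pi * Complex.I * ((⟪p.2, x⟫ : ℝ) : ℂ) / (ε : ℂ)
        = ((2 * Real.pi * ⟪p.2, x⟫ / ε : ℝ) : ℂ) * Complex.I := by
      push_cast
      ring
    have h2 : ‖Complex.exp (-((Real.pi / ε : ℝ) : ℂ) * ((‖x - p.1‖ ^ 2 : ℝ) : ℂ))‖ ≤ 1 := by
      rw [← Complex.ofReal_neg, ← Complex.ofReal_mul, Complex.norm_exp_ofReal, Real.exp_le_one_iff]
      have : 0 ≤ Real.pi / ε * ‖x - p.1‖ ^ 2 := by positivity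
      linarith
    simp only [hgdef]
    rw [norm_mul, norm_mul, h1, Complex.norm_exp_ofReal_mul_I, one_mul]
    exact mul_le_of_le_one_left (norm_nonneg _) h2
  have key := integral_integral_mul_conj μ volume g hg (fun x => ‖u x‖)
    (hu.integrable_of_hasCompactSupport hsupp).norm hgb
  have hpt : ∀ x y, K x y * u x * (starRingEnd ℂ) (u y) =
      (((2 / ε) ^ ((n : ℝ) / 2) : ℝ) : ℂ) * ∫ p, g p x * (starRingEnd ℂ) (g p y) ∂μ := by
    intro x y
    rw [hK, mul_assoc, mul_assoc, ← integral_mul_const]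
    congr 2
    funext p
    -- Conjugation flips the sign of the phase only, so the exponents add up to those of the kernel.
    have hfac : Complex.exp (2 * Real.pi * Complex.I * ((⟪p.2, x - y⟫ : ℝ) : ℂ) / (ε : ℂ)) *
          Complex.exp (-((Real.pi / ε : ℝ) : ℂ) * (((‖x - p.1‖ ^ 2 + ‖y - p.1‖ ^ 2 : ℝ)) : ℂ)) =
        (Complex.exp (2 * Real.pi * Complex.I * ((⟪p.2, x⟫ : ℝ) : ℂ) / (ε : ℂ)) *
          Complex.exp (-((Real.pi / ε : ℝ) : ℂ) * ((‖x - p.1‖ ^ 2 : ℝ) : ℂ))) *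
        (starRingEnd ℂ) (Complex.exp (2 * Real.pi * Complex.I * ((⟪p.2, y⟫ : ℝ) : ℂ) / (ε : ℂ)) *
          Complex.exp (-((Real.pi / ε : ℝ) : ℂ) * ((‖y - p.1‖ ^ 2 : ℝ) : ℂ))) := by
      simp only [← Complex.exp_conj, ← Complex.exp_add, inner_sub_right]
      simp only [map_add, map_mul, map_div₀, map_neg, Complex.conj_ofReal, Complex.conj_I,
        map_ofNat]
      congr 1
      push_cast
      ring
    rw [hfac]
    simp only [hgdef, map_mul]
    ring
  refine ⟨(2 / ε) ^ ((n : ℝ) / 2) * ∫ p, ‖∫ x, g p x‖ ^ 2 ∂μ, ?_, ?_⟩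
  · exact mul_nonneg (by positivity) (integral_nonneg fun p => by positivity)
  · simp only [hpt, integral_const_mul]
    rw [key, Complex.ofReal_mul]
end

section
/- Let n ≥ 1, ε > 0, let (u_m)_{m∈ℕ} be an orthonormal family in L²(ℝ^n), and let (λ_m)_{m∈ℕ} be nonnegative reals with ∑_m λ_m < ∞. Define, for x, K ∈ ℝ^n, G(x,K) = ∑_m λ_m u_m(x + εK/2) · conj(u_m(x − εK/2)). Then sup_{K ∈ ℝ^n} ∫_{ℝ^n} |G(x,K)| dx = ∑_m λ_m. (This says that for a nonnegative trace-class operator D = ∑_m λ_m |u_m⟩⟨u_m|, the A'-norm of its Wigner function equals its trace norm tr(D).) -/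
/-!
Pointwise `|a * conj b| ≤ (|a|² + |b|²) / 2`, so, by translation invariance of Lebesgue measure,
each term of the series has `L¹`-norm at most `lam m` whatever `K` is, which gives
`∫ |G(x,K)| dx ≤ ∑ lam m`. At `K = 0` the series is `∑ lam m |u_m(x)|²`, a series of nonnegative
functions with integrals `lam m`, so the bound is attained there.
-/

open MeasureTheory

/-- The correlation of an `L²`-normalized function with a translate of itself has `L¹`-norm at most
one. -/
lemma lintegral_correlation_le {n : ℕ} (f : EuclideanSpace ℝ (Fin n) → ℂ) (hf : Measurable f)
    (h1 : ∫⁻ x, ENNReal.ofReal (‖f x‖ ^ 2) = 1) (a : EuclideanSpace ℝ (Fin n)) :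
    ∫⁻ x, ‖f (x + a) * (starRingEnd ℂ) (f (x - a))‖ₑ ≤ 1 := by
  set g : EuclideanSpace ℝ (Fin n) → ENNReal := fun x => ENNReal.ofReal (‖f x‖ ^ 2) with hg
  have hgm : Measurable g := by fun_prop
  calc ∫⁻ x, ‖f (x + a) * (starRingEnd ℂ) (f (x - a))‖ₑ
      ≤ ∫⁻ x, ENNReal.ofReal (1 / 2) * (g (x + a) + g (x - a)) := by
        refine lintegral_mono fun x => ?_
        rw [hg, ← ofReal_norm, ← ENNReal.ofReal_add (by positivity) (by positivity),
          ← ENNReal.ofReal_mul (by norm_num)]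
        apply ENNReal.ofReal_le_ofReal
        rw [norm_mul, RCLike.norm_conj]
        nlinarith [sq_nonneg (‖f (x + a)‖ - ‖f (x - a)‖)]
    _ = 1 := by
        rw [lintegral_const_mul _ (by fun_prop), lintegral_add_left (by fun_prop),
          lintegral_add_right_eq_self g a, lintegral_sub_right_eq_self g a, h1,
          ← ENNReal.ofReal_one, ← ENNReal.ofReal_add (by norm_num) (by norm_num),
          ← ENNReal.ofReal_mul (by norm_num)]
        norm_num

/-- For a nonnegative trace-class operator `D = ∑ λ_m |u_m⟩⟨u_m|` (with `(u_m)` an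
orthonormal family in `L²(ℝⁿ)` and `λ_m ≥ 0` summable), the `A'`-norm of its Wigner
function equals its trace: `sup_K ∫ |𝓕₂W(x,K)| dx = ∑ λ_m`, where
`𝓕₂W(x,K) = ∑ λ_m u_m(x+εK/2) conj(u_m(x−εK/2))`. -/
theorem stmt_2 (n : ℕ) (hn : 1 ≤ n) (ε : ℝ) (hε : 0 < ε)
    (u : ℕ → EuclideanSpace ℝ (Fin n) → ℂ)
    (humeas : ∀ m, Measurable (u m))
    (horth : ∀ m l, (∫ x : EuclideanSpace ℝ (Fin n), u m x * (starRingEnd ℂ) (u l x))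
      = if m = l then 1 else 0)
    (lam : ℕ → ℝ) (hlam : ∀ m, 0 ≤ lam m) (hsum : Summable lam)
    (G : EuclideanSpace ℝ (Fin n) → EuclideanSpace ℝ (Fin n) → ℂ)
    (hG : ∀ x K, G x K = ∑' m, ((lam m : ℂ) *
      u m (x + (ε / 2) • K) * (starRingEnd ℂ) (u m (x - (ε / 2) • K)))) :
    (⨆ K : EuclideanSpace ℝ (Fin n), ∫ x : EuclideanSpace ℝ (Fin n), ‖G x K‖)
      = ∑' m, lam m := by
  have hsq : ∀ m, ∫ x, ‖u m x‖ ^ 2 = 1 := by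
    intro m
    have h := horth m m
    simp only [Complex.mul_conj', if_true] at h
    have h2 : ((∫ x, ‖u m x‖ ^ 2 : ℝ) : ℂ) = 1 := by
      rw [← h, ← integral_complex_ofReal]
      simp
    exact_mod_cast h2
  -- A non-integrable function would have integral `0`, not `1`.
  have hint : ∀ m, Integrable (fun x => ‖u m x‖ ^ 2) := fun m =>
    Integrable.of_integral_ne_zero (by rw [hsq m]; exact one_ne_zero)
  have hlint : ∀ m, ∫⁻ x, ENNReal.ofReal (‖u m x‖ ^ 2) = 1 := by
    intro m
    rw [← ofReal_integral_eq_lintegral_ofReal (hint m) (ae_of_all _ fun x => by positivity),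
      hsq m, ENNReal.ofReal_one]
  have hupper : ∀ K, ∫ x, ‖G x K‖ ≤ ∑' m, lam m := by
    intro K
    have key : ‖∫ x, ‖G x K‖‖ₑ ≤ ENNReal.ofReal (∑' m, lam m) := by
      calc ‖∫ x, ‖G x K‖‖ₑ ≤ ∫⁻ x, ‖‖G x K‖‖ₑ := enorm_integral_le_lintegral_enorm _
        _ ≤ ∫⁻ x, ∑' m, ENNReal.ofReal (lam m) *
              ‖u m (x + (ε / 2) • K) * (starRingEnd ℂ) (u m (x - (ε / 2) • K))‖ₑ := by
            refine lintegral_mono fun x => ?_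
            rw [enorm_norm, hG]
            refine enorm_tsum_le_tsum_enorm.trans (ENNReal.tsum_le_tsum fun m => ?_)
            rw [mul_assoc, enorm_mul, ← ofReal_norm (lam m : ℂ), Complex.norm_real,
              Real.norm_of_nonneg (hlam m)]
        _ = ∑' m, ENNReal.ofReal (lam m) *
              ∫⁻ x, ‖u m (x + (ε / 2) • K) * (starRingEnd ℂ) (u m (x - (ε / 2) • K))‖ₑ := by
            have hm : ∀ m, Measurable fun x =>
                ‖u m (x + (ε / 2) • K) * (starRingEnd ℂ) (u m (x - (ε / 2) • K))‖ₑ := by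
              intro m
              have := humeas m
              have hc : Measurable (starRingEnd ℂ) := Complex.continuous_conj.measurable
              exact ((this.comp (measurable_id.add_const _)).mul
                (hc.comp (this.comp (measurable_id.sub_const _)))).enorm
            rw [lintegral_tsum fun m => ((hm m).const_mul _).aemeasurable]
            exact tsum_congr fun m => lintegral_const_mul _ (hm m)
        _ ≤ ∑' m, ENNReal.ofReal (lam m) := ENNReal.tsum_le_tsum fun m =>
            mul_le_of_le_one_right' (lintegral_correlation_le _ (humeas m) (hlint m) _)
        _ = ENNReal.ofReal (∑' m, lam m) := (ENNReal.ofReal_tsum_of_nonneg hlam hsum).symm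
    rw [← ofReal_norm] at key
    exact (Real.le_norm_self _).trans
      ((ENNReal.ofReal_le_ofReal_iff (tsum_nonneg hlam)).1 key)
  have hzero : ∫ x, ‖G x 0‖ = ∑' m, lam m := by
    have hG0 : ∀ x, ‖G x 0‖ = ∑' m, lam m * ‖u m x‖ ^ 2 := by
      intro x
      have : G x 0 = ((∑' m, lam m * ‖u m x‖ ^ 2 : ℝ) : ℂ) := by
        rw [hG, Complex.ofReal_tsum]
        refine tsum_congr fun m => ?_
        simp [mul_assoc, Complex.mul_conj']
      rw [this, Complex.norm_real, Real.norm_of_nonneg]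
      exact tsum_nonneg fun m => mul_nonneg (hlam m) (by positivity)
    have hI : ∀ m, ∫ x, lam m * ‖u m x‖ ^ 2 = lam m := by
      intro m
      rw [integral_const_mul, hsq m, mul_one]
    have hN : ∀ m, ∫ x, ‖lam m * ‖u m x‖ ^ 2‖ = lam m := by
      intro m
      rw [← hI m]
      refine integral_congr_ae (ae_of_all _ fun x => ?_)
      simp [hI m, abs_of_nonneg (hlam m)]
    simp only [hG0]
    rw [← integral_tsum_of_summable_integral_norm (fun m => (hint m).const_mul _)
      (by simpa only [hN] using hsum)]
    exact tsum_congr hI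
  refine le_antisymm (ciSup_le hupper) ?_
  rw [← hzero]
  exact le_ciSup (f := fun K => ∫ x, ‖G x K‖) ⟨_, Set.forall_mem_range.2 hupper⟩ 0
end

section
/- Let V : ℝ² → ℝ be continuously differentiable with ∂_{x₁}V(x) ≤ 0 for every x with x₁ > 0. Let T > 0 and let (x,p) : [0,T] → ℝ² × ℝ² be a C¹ solution of the Hamiltonian system ẋ(t) = 2π p(t), ṗ(t) = −(1/2π)∇V(x(t)). Set a = x₁(0) and m = min(p₁(0), 0). If a > 0 and a + 2πT·m > 0, then for all t ∈ [0,T] one has x₁(t) ≥ a + 2πt·m > 0; in particular the trajectory never reaches the hyperplane {x₁ = 0}. -/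
/-!
Only the first components `q = x₁`, `r = p₁` matter: `q' = 2π r`, and `r' ≥ 0` as long as `q > 0`,
by repulsiveness. Hence, as long as `q > 0`, `r` stays above `r(0) ≥ m`, so `q` stays above the
free line `a + 2π t m` (`free_lower_bound`). That line is positive on all of `[0, T]`, so a first
time at which `q ≤ 0` cannot exist: the lower bound still holds at that time by continuity.
-/

open MeasureTheory

theorem gradient_apply_zero (V : EuclideanSpace ℝ (Fin 2) → ℝ) (y : EuclideanSpace ℝ (Fin 2)) :
    gradient V y 0 = fderiv ℝ V y (EuclideanSpace.single 0 1) := by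
  have h : inner ℝ (gradient V y) (EuclideanSpace.single 0 1) =
      fderiv ℝ V y (EuclideanSpace.single 0 1) := by
    simp only [gradient, InnerProductSpace.toDual_symm_apply]
  rw [← h, EuclideanSpace.inner_single_right]
  simp

/-- Comparison with free motion up to time `s`: positivity of `q` is only needed strictly before
`s`, so the bound applies at a first time where positivity might fail. -/
theorem free_lower_bound {q r g : ℝ → ℝ} {s c m : ℝ} (hs : 0 ≤ s) (hc : 0 ≤ c)
    (hq : ∀ t ∈ Set.Icc 0 s, HasDerivAt q (c * r t) t)
    (hr : ∀ t ∈ Set.Icc 0 s, HasDerivAt r (g t) t)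
    (hg : ∀ t, 0 < q t → 0 ≤ g t) (hm : m ≤ r 0)
    (hpos : ∀ t ∈ Set.Ico 0 s, 0 < q t) :
    q 0 + c * s * m ≤ q s := by
  have hrmono : MonotoneOn r (Set.Icc 0 s) := by
    refine monotoneOn_of_hasDerivWithinAt_nonneg (convex_Icc 0 s)
      (fun t ht => (hr t ht).continuousAt.continuousWithinAt)
      (fun t ht => (hr t (interior_subset ht)).hasDerivWithinAt) (fun t ht => ?_)
    rw [interior_Icc] at ht
    exact hg t (hpos t ⟨ht.1.le, ht.2⟩)
  have hd : ∀ t ∈ Set.Icc 0 s, HasDerivAt (fun t => q t - (c * m) * t) (c * r t - c * m) t := by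
    intro t ht
    have h := (hq t ht).sub ((hasDerivAt_id t).const_mul (c * m))
    rw [mul_one] at h
    exact h
  have hqmono : MonotoneOn (fun t => q t - (c * m) * t) (Set.Icc 0 s) := by
    refine monotoneOn_of_hasDerivWithinAt_nonneg (convex_Icc 0 s)
      (fun t ht => (hd t ht).continuousAt.continuousWithinAt)
      (fun t ht => (hd t (interior_subset ht)).hasDerivWithinAt) (fun t ht => ?_)
    have ht' := interior_subset ht
    have h1 : m ≤ r t := hm.trans (hrmono (Set.left_mem_Icc.2 hs) ht' ht'.1)
    exact sub_nonneg.2 (mul_le_mul_of_nonneg_left h1 hc)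
  have h := hqmono (Set.left_mem_Icc.2 hs) (Set.right_mem_Icc.2 hs) hs
  simp only at h
  linarith

/-- Confinement away from the singular hyperplane for a repulsive potential:
if `∂_{x₁}V ≤ 0` on `{x₁ > 0}` and `(x,p)` solves `ẋ = 2πp`, `ṗ = −(1/2π)∇V(x)`
on `[0,T]`, with `a = x₁(0) > 0`, `m = min(p₁(0),0)` and `a + 2πT·m > 0`, then
`x₁(t) ≥ a + 2πt·m > 0` for all `t ∈ [0,T]`. -/
theorem stmt_9
    (V : EuclideanSpace ℝ (Fin 2) → ℝ) (hV : ContDiff ℝ 1 V)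
    (hrep : ∀ x : EuclideanSpace ℝ (Fin 2), 0 < x 0 →
      fderiv ℝ V x (EuclideanSpace.single 0 1) ≤ 0)
    (T : ℝ) (hT : 0 < T)
    (x p : ℝ → EuclideanSpace ℝ (Fin 2))
    (hx : ∀ t ∈ Set.Icc (0 : ℝ) T, HasDerivAt x ((2 * Real.pi) • p t) t)
    (hp : ∀ t ∈ Set.Icc (0 : ℝ) T,
      HasDerivAt p (-(1 / (2 * Real.pi)) • gradient V (x t)) t)
    (a m : ℝ) (ha : a = x 0 0) (hm : m = min (p 0 0) 0)
    (hapos : 0 < a) (hconf : 0 < a + 2 * Real.pi * T * m) :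
    ∀ t ∈ Set.Icc (0 : ℝ) T, a + 2 * Real.pi * t * m ≤ x t 0 ∧ 0 < x t 0 := by
  have hpi := Real.pi_pos
  have hq : ∀ t ∈ Set.Icc (0 : ℝ) T, HasDerivAt (fun t => x t 0) (2 * Real.pi * p t 0) t := by
    intro t ht
    exact (EuclideanSpace.proj (𝕜 := ℝ) (0 : Fin 2)).hasFDerivAt.comp_hasDerivAt t (hx t ht)
  have hr : ∀ t ∈ Set.Icc (0 : ℝ) T, HasDerivAt (fun t => p t 0)
      (-(1 / (2 * Real.pi)) * gradient V (x t) 0) t := by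
    intro t ht
    exact (EuclideanSpace.proj (𝕜 := ℝ) (0 : Fin 2)).hasFDerivAt.comp_hasDerivAt t (hp t ht)
  have hm0 : m ≤ 0 := hm ▸ min_le_right _ _
  have key : ∀ s ∈ Set.Icc (0 : ℝ) T, (∀ t ∈ Set.Ico (0 : ℝ) s, 0 < x t 0) →
      a + 2 * Real.pi * s * m ≤ x s 0 := by
    intro s hs hpos
    rw [ha]
    refine free_lower_bound (q := fun t => x t 0) (r := fun t => p t 0)
      (g := fun t => -(1 / (2 * Real.pi)) * gradient V (x t) 0) hs.1 (by positivity)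
      (fun t ht => hq t ⟨ht.1, ht.2.trans hs.2⟩) (fun t ht => hr t ⟨ht.1, ht.2.trans hs.2⟩)
      (fun t ht => ?_) (hm ▸ min_le_left _ _) hpos
    have h1 := hrep (x t) ht
    rw [← gradient_apply_zero] at h1
    exact mul_nonneg_of_nonpos_of_nonpos (neg_nonpos.2 (by positivity)) h1
  have line_pos : ∀ s ∈ Set.Icc (0 : ℝ) T, 0 < a + 2 * Real.pi * s * m := by
    intro s hs
    have h1 : 2 * Real.pi * s ≤ 2 * Real.pi * T := mul_le_mul_of_nonneg_left hs.2 (by positivity)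
    have h2 := mul_le_mul_of_nonpos_right h1 hm0
    linarith
  have hpos : ∀ t ∈ Set.Icc (0 : ℝ) T, 0 < x t 0 := by
    by_contra! hcon
    obtain ⟨t₁, ht₁, hneg⟩ := hcon
    have hcont : ContinuousOn (fun t => x t 0) (Set.Icc 0 T) :=
      fun t ht => (hq t ht).continuousAt.continuousWithinAt
    have hcomp : IsCompact (Set.Icc (0 : ℝ) T ∩ (fun t => x t 0) ⁻¹' Set.Iic 0) :=
      isCompact_Icc.of_isClosed_subset
        (hcont.preimage_isClosed_of_isClosed isClosed_Icc isClosed_Iic) Set.inter_subset_left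
    -- `s` is the first time in `[0, T]` at which the first component is nonpositive.
    obtain ⟨s, ⟨hs, hs0⟩, hleast⟩ := hcomp.exists_isLeast ⟨t₁, ht₁, hneg⟩
    have h1 := key s hs fun t ht => by
      by_contra! h
      exact absurd (hleast ⟨⟨ht.1, ht.2.le.trans hs.2⟩, h⟩) (not_le.2 ht.2)
    have hs0' : x s 0 ≤ 0 := hs0
    linarith [line_pos s hs]
  exact fun t ht => ⟨key t ht fun u hu => hpos u ⟨hu.1, hu.2.le.trans ht.2⟩, hpos t ht⟩
end
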